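/- (Large deviations lower bound under regularity.) Suppose Γ = graph T for a map T: X_0 → Y, X_0 is arcwise connected (any two points of X_0 are joined by a continuous curve of finite length in X_0), and for every compact K ⊂ X_0 one has |c(x_1,T(x_1)) + c(x_2,T(x_2)) − c(x_1,T(x_2)) − c(x_2,T(x_1))| = o(d(x_1,x_2)) uniformly over x_1, x_2 ∈ K. Then for every open set U ⊂ X_0 × Y_0, liminf_{ε→0} ε log π_ε(U) ≥ −inf_{(x,y)∈U} I(x,y). -/

import Mathlib

/-!
Cyclical invariance means that `π_ε` is `exp(-c/ε)` times a product measure. If `c ≥ m` on `A × B`,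
`c ≥ m'` on `A' × B'`, `c ≤ M` on `A × B'` and `c ≤ M'` on `A' × B`, it follows that
`exp((m + m' - M - M')/ε) π_ε(A × B) π_ε(A' × B') ≤ π_ε(A × B') π_ε(A' × B)`,
so exponential lower bounds near `(x, y)` and `(x', y')` give one near the crossed point `(x, y')`.
Points of `Γ` carry the exponent `0` by weak convergence. A chain in `Γ` from `(x, T x)` to
`(x', y)` therefore yields at `(x, y)` the exponent `G - S`, where `S ≤ I(x, y)` is the cost saved
by cycling through the chain and `G` is the sum of the costs saved by exchanges between consecutive
points. Along fine partitions of a rectifiable curve in `X₀`, the regularity of `c` makes `G`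
arbitrarily small.
-/

open MeasureTheory Filter Topology Set
open scoped ENNReal

noncomputable section

namespace EOT

variable {X Y : Type*}

/-- A coupling of `μ` and `ν`: a probability measure on the product with the given marginals. -/
def IsCoupling [MeasurableSpace X] [MeasurableSpace Y]
    (μ : Measure X) (ν : Measure Y) (π : Measure (X × Y)) : Prop :=
  IsProbabilityMeasure π ∧ π.map Prod.fst = μ ∧ π.map Prod.snd = ν

/-- `(c,ε)`-cyclical invariance: `π` is equivalent to `P = μ ⊗ ν`, with a positive version of the
density satisfying the cyclical identity for all `k` points. -/
def IsCyclInvariant [MeasurableSpace X] [MeasurableSpace Y]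
    (c : X → Y → ℝ) (ε : ℝ) (μ : Measure X) (ν : Measure Y)
    (π : Measure (X × Y)) : Prop :=
  IsCoupling μ ν π ∧
  ∃ D : X × Y → ℝ, Measurable D ∧ (∀ z, 0 < D z) ∧
    π = (μ.prod ν).withDensity (fun z => ENNReal.ofReal (D z)) ∧
    ∀ (k : ℕ) (x : Fin (k + 1) → X) (y : Fin (k + 1) → Y),
      (∏ i, D (x i, y i)) =
        Real.exp (-(1 / ε) * ((∑ i, c (x i) (y i)) - ∑ i, c (x i) (y (i + 1)))) *
        ∏ i, D (x i, y (i + 1))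

/-- Topological support of a measure. -/
def mSupport {Z : Type*} [TopologicalSpace Z] [MeasurableSpace Z] (π : Measure Z) : Set Z :=
  {z | ∀ U : Set Z, IsOpen U → z ∈ U → 0 < π U}

/-- Weak convergence `π ε → π₀` as `ε → 0⁺`, tested against bounded continuous functions. -/
def TendstoWeakly {Z : Type*} [TopologicalSpace Z] [MeasurableSpace Z]
    (π : ℝ → Measure Z) (π₀ : Measure Z) : Prop :=
  ∀ f : BoundedContinuousFunction Z ℝ,
    Tendsto (fun ε => ∫ z, f z ∂(π ε)) (𝓝[>] (0 : ℝ)) (𝓝 (∫ z, f z ∂π₀))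

/-- `c`-cyclical monotonicity of a set `Γ ⊆ X × Y`. -/
def CCyclMonotone (c : X → Y → ℝ) (Γ : Set (X × Y)) : Prop :=
  ∀ (k : ℕ) (p : Fin (k + 1) → X × Y), (∀ i, p i ∈ Γ) →
    (∑ i, c (p i).1 (p i).2) ≤ ∑ i, c (p i).1 (p (i + 1)).2

/-- The rate function `I(x,y)`: supremum over `k ≥ 2`, points `(x_i,y_i)_{i=2}^k ⊆ Γ`
(the first point being `z`) and permutations `σ` of the cost difference. -/
def rateI (c : X → Y → ℝ) (Γ : Set (X × Y)) (z : X × Y) : EReal :=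
  ⨆ (k : ℕ) (p : Fin (k + 2) → X × Y) (_ : p 0 = z) (_ : ∀ i, i ≠ 0 → p i ∈ Γ)
    (σ : Equiv.Perm (Fin (k + 2))),
    (((∑ i, c (p i).1 (p i).2) - ∑ i, c (p i).1 (p (σ i)).2 : ℝ) : EReal)

/-- The variant of the rate function using only the cyclic shift. -/
def rateICyc (c : X → Y → ℝ) (Γ : Set (X × Y)) (z : X × Y) : EReal :=
  ⨆ (k : ℕ) (p : Fin (k + 2) → X × Y) (_ : p 0 = z) (_ : ∀ i, i ≠ 0 → p i ∈ Γ),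
    (((∑ i, c (p i).1 (p i).2) - ∑ i, c (p i).1 (p (i + 1)).2 : ℝ) : EReal)

open scoped Classical in
/-- Relative entropy (Kullback–Leibler divergence) `H(π|R)`, valued in `EReal`. -/
def relEntropy {Z : Type*} [MeasurableSpace Z] (π R : Measure Z) : EReal :=
  if π ≪ R ∧ Integrable (fun z => Real.log (π.rnDeriv R z).toReal) π
  then ((∫ z, Real.log (π.rnDeriv R z).toReal ∂π : ℝ) : EReal)
  else ⊤

/-- Transport cost `∫ c dπ` (as a lower integral). -/
def transportCost [MeasurableSpace X] [MeasurableSpace Y]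
    (c : X → Y → ℝ) (π : Measure (X × Y)) : ℝ≥0∞ :=
  ∫⁻ z, ENNReal.ofReal (c z.1 z.2) ∂π

/-- Entropic optimal transport objective `∫ c dπ + ε H(π|μ⊗ν)`. -/
def eotObj [MeasurableSpace X] [MeasurableSpace Y]
    (c : X → Y → ℝ) (ε : ℝ) (μ : Measure X) (ν : Measure Y) (π : Measure (X × Y)) : EReal :=
  (transportCost c π : EReal) + (ε : EReal) * relEntropy π (μ.prod ν)

/-- The `c`-conjugate `ψ^c(y) = inf_x [ψ(x) + c(x,y)]`. -/
def cConj (c : X → Y → ℝ) (ψ : X → EReal) (y : Y) : EReal :=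
  ⨅ x, ψ x + (c x y : EReal)

/-- A proper `c`-convex function `ψ(x) = sup_y [ζ(y) − c(x,y)]`. -/
def IsCConvex (c : X → Y → ℝ) (ψ : X → EReal) : Prop :=
  (∀ x, ψ x ≠ ⊥) ∧ (∃ x, ψ x ≠ ⊤) ∧
  ∃ ζ : Y → EReal, ∀ x, ψ x = ⨆ y, ζ y - (c x y : EReal)

/-- The `c`-subdifferential `∂_c ψ = {(x,y) : ψ^c(y) − ψ(x) = c(x,y)}`. -/
def cSubdiff (c : X → Y → ℝ) (ψ : X → EReal) : Set (X × Y) :=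
  {p | cConj c ψ p.2 - ψ p.1 = (c p.1 p.2 : EReal)}

/-- A Kantorovich potential for `Γ`: a `c`-convex `ψ` with `Γ ⊆ ∂_c ψ`. -/
def IsKantorovichPotential (c : X → Y → ℝ) (Γ : Set (X × Y)) (ψ : X → EReal) : Prop :=
  IsCConvex c ψ ∧ Γ ⊆ cSubdiff c ψ

/-- Uniqueness of Kantorovich potentials on a set `Λ ⊆ X`. -/
def UniquenessOfPotentials (c : X → Y → ℝ) (Γ : Set (X × Y)) (Λ : Set X) : Prop :=
  ∀ ψ₁ ψ₂ : X → EReal, IsKantorovichPotential c Γ ψ₁ → IsKantorovichPotential c Γ ψ₂ →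
    ∀ x ∈ Λ, ∀ x' ∈ Λ, ψ₁ x - ψ₂ x = ψ₁ x' - ψ₂ x'

/-- The Rockafellar antiderivative `ψ_{(x₀,y₀)}` of `Γ`. -/
def rockafellar (c : X → Y → ℝ) (Γ : Set (X × Y)) (z₀ : X × Y) (x : X) : EReal :=
  ⨆ (k : ℕ) (p : Fin (k + 1) → X × Y) (_ : ∀ i, p i ∈ Γ),
    ((c z₀.1 z₀.2 - c (p 0).1 z₀.2 +
        ∑ i : Fin (k + 1),
          (c (p i).1 (p i).2 -
            c (if h : (i : ℕ) + 1 < k + 1 then (p ⟨(i : ℕ) + 1, h⟩).1 else x) (p i).2) : ℝ) : EReal)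

section Statement

variable {X Y : Type*}
  [MeasurableSpace X] [MetricSpace X] [PolishSpace X] [BorelSpace X]
  [MeasurableSpace Y] [MetricSpace Y] [PolishSpace Y] [BorelSpace Y]

section Chains

variable {α β : Type*}

/-- The cost saved on the pairs `p`, `q` by exchanging their second coordinates. It is the exponent
with which mass of `π_ε` near `p` and `q` forces mass near the crossed pairs. -/
def exchangeGain (c : α → β → ℝ) (p q : α × β) : ℝ :=
  c p.1 p.2 + c q.1 q.2 - c p.1 q.2 - c q.1 p.2

/-- The cost saved by a cyclic shift of the second coordinates along the pairs
`(x₀, yₙ), (x₀, y₀), (x₁, y₁), …, (xₙ, yₙ)`, where `z i = (xᵢ, yᵢ)`. If the `z i` lie in `Γ`, it is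
one of the values over which the supremum `rateI c Γ (x₀, yₙ)` is taken. -/
def cycleGain (c : α → β → ℝ) (z : ℕ → α × β) (n : ℕ) : ℝ :=
  c (z 0).1 (z n).2 - c (z 0).1 (z 0).2 +
    ∑ i ∈ Finset.range n, (c (z i).1 (z i).2 - c (z i).1 (z (i + 1)).2)

theorem cycleGain_succ (c : α → β → ℝ) (z : ℕ → α × β) (n : ℕ) :
    cycleGain c z (n + 1) = cycleGain c z n + exchangeGain c (z n) (z (n + 1)) -
      exchangeGain c ((z 0).1, (z n).2) (z (n + 1)) := by
  simp only [cycleGain, exchangeGain, Finset.sum_range_succ]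
  ring

theorem rateICyc_le_rateI (c : α → β → ℝ) (Γ : Set (α × β)) (p : α × β) :
    rateICyc c Γ p ≤ rateI c Γ p :=
  iSup_mono fun k => iSup_mono fun q => iSup₂_mono fun _ _ =>
    le_iSup (fun σ : Equiv.Perm (Fin (k + 2)) =>
      (((∑ i, c (q i).1 (q i).2) - ∑ i, c (q i).1 (q (σ i)).2 : ℝ) : EReal)) (Equiv.addRight 1)

theorem cycleGain_le_rateICyc (c : α → β → ℝ) {Γ : Set (α × β)} {z : ℕ → α × β} {n : ℕ}
    (hz : ∀ i ≤ n, z i ∈ Γ) :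
    (cycleGain c z n : EReal) ≤ rateICyc c Γ ((z 0).1, (z n).2) := by
  let p : Fin (n + 2) → α × β := Fin.cons ((z 0).1, (z n).2) fun j : Fin (n + 1) => z j
  have p_succ (j : Fin (n + 1)) : p j.succ = z j := Fin.cons_succ (α := fun _ => α × β) _ _ j
  have p_mem (i : Fin (n + 2)) (hi : i ≠ 0) : p i ∈ Γ := by
    obtain ⟨j, rfl⟩ := Fin.exists_succ_eq.2 hi
    exact p_succ j ▸ hz j (by omega)
  have shift (j : Fin n) : j.castSucc.succ + 1 = j.succ.succ := by
    rw [Fin.succ_castSucc, Fin.coeSucc_eq_succ]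
  have gain_eq : (∑ i, c (p i).1 (p i).2) - ∑ i, c (p i).1 (p (i + 1)).2 = cycleGain c z n := by
    have p_zero : p 0 = ((z 0).1, (z n).2) := rfl
    have p_one : p (0 + 1) = z 0 := p_succ 0
    have p_wrap : p ((Fin.last n).succ + 1) = ((z 0).1, (z n).2) := by
      rw [Fin.succ_last, Fin.last_add_one, p_zero]
    rw [← Finset.sum_sub_distrib, Fin.sum_univ_succ, Fin.sum_univ_castSucc]
    simp only [shift, p_zero, p_one, p_wrap, p_succ, Fin.val_castSucc, Fin.val_last, Fin.val_succ]
    rw [Fin.sum_univ_eq_sum_range (fun i => c (z i).1 (z i).2 - c (z i).1 (z (i + 1)).2), cycleGain]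
    ring
  rw [← gain_eq]
  exact le_iSup_of_le n (le_iSup_of_le p (le_iSup₂_of_le rfl p_mem le_rfl))

end Chains

section Curves

variable {E : Type*} [PseudoMetricSpace E] {a b : ℝ} {φ : ℝ → E}

theorem exists_monotone_forall_dist_lt (hab : a ≤ b) (hφ : ContinuousOn φ (Icc a b)) {δ : ℝ}
    (hδ : 0 < δ) :
    ∃ (n : ℕ) (t : ℕ → ℝ), Monotone t ∧ t 0 = a ∧ t n = b ∧ (∀ i, t i ∈ Icc a b) ∧
      ∀ i, dist (φ (t i)) (φ (t (i + 1))) < δ := by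
  obtain ⟨t, ht0, ht_mono, ⟨n, htn⟩, ht_ball⟩ := exists_monotone_Icc_subset_open_cover_Icc hab
    (c := fun x : E => (Icc a b).domRestrict φ ⁻¹' Metric.ball x (δ / 2))
    (fun _ => Metric.isOpen_ball.preimage hφ.domRestrict)
    fun s _ => mem_iUnion.2 ⟨φ s, Metric.mem_ball_self (half_pos hδ)⟩
  refine ⟨n, fun i => t i, fun _ _ hij => ht_mono hij, ht0, htn n le_rfl, fun i => (t i).2,
    fun i => ?_⟩
  obtain ⟨x, hx⟩ := ht_ball i
  have step : t i ≤ t (i + 1) := ht_mono i.le_succ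
  calc dist (φ (t i)) (φ (t (i + 1)))
      ≤ dist (φ (t i)) x + dist (φ (t (i + 1))) x := dist_triangle_right _ _ _
    _ < δ / 2 + δ / 2 := add_lt_add (hx (left_mem_Icc.2 step)) (hx (right_mem_Icc.2 step))
    _ = δ := add_halves δ

theorem sum_dist_le_eVariationOn {s : Set ℝ} (hφ : eVariationOn φ s ≠ ⊤) {t : ℕ → ℝ}
    (ht : Monotone t) (hts : ∀ i, t i ∈ s) (n : ℕ) :
    ∑ i ∈ Finset.range n, dist (φ (t i)) (φ (t (i + 1))) ≤ (eVariationOn φ s).toReal := by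
  rw [Finset.sum_congr rfl fun i _ => (dist_comm _ _).trans (dist_edist _ _),
    ← ENNReal.toReal_sum fun _ _ => edist_ne_top _ _]
  exact ENNReal.toReal_mono hφ (eVariationOn.sum_le ht hts)

theorem exists_abs_sum_le_of_rectifiable (hab : a ≤ b) (hφ : ContinuousOn φ (Icc a b))
    (hφ_var : eVariationOn φ (Icc a b) ≠ ⊤) {g : E → E → ℝ}
    (hg : ∀ η > 0, ∃ δ > 0, ∀ x ∈ φ '' Icc a b, ∀ x' ∈ φ '' Icc a b, dist x x' < δ →
      |g x x'| ≤ η * dist x x') {η : ℝ} (hη : 0 < η) :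
    ∃ (n : ℕ) (u : ℕ → E), u 0 = φ a ∧ u n = φ b ∧ (∀ i, u i ∈ φ '' Icc a b) ∧
      |∑ i ∈ Finset.range n, g (u i) (u (i + 1))| ≤ η := by
  set L := (eVariationOn φ (Icc a b)).toReal
  have hL : 0 < L + 1 := by positivity
  obtain ⟨δ, hδ, hgδ⟩ := hg (η / (L + 1)) (div_pos hη hL)
  obtain ⟨n, t, ht_mono, rfl, rfl, ht_mem, ht_dist⟩ := exists_monotone_forall_dist_lt hab hφ hδ
  have u_mem (i : ℕ) : φ (t i) ∈ φ '' Icc (t 0) (t n) := mem_image_of_mem φ (ht_mem i)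
  refine ⟨n, fun i => φ (t i), rfl, rfl, u_mem, ?_⟩
  calc |∑ i ∈ Finset.range n, g (φ (t i)) (φ (t (i + 1)))|
      ≤ ∑ i ∈ Finset.range n, |g (φ (t i)) (φ (t (i + 1)))| := Finset.abs_sum_le_sum_abs _ _
    _ ≤ ∑ i ∈ Finset.range n, η / (L + 1) * dist (φ (t i)) (φ (t (i + 1))) :=
        Finset.sum_le_sum fun i _ => hgδ _ (u_mem i) _ (u_mem (i + 1)) (ht_dist i)
    _ = η / (L + 1) * ∑ i ∈ Finset.range n, dist (φ (t i)) (φ (t (i + 1))) :=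
        (Finset.mul_sum _ _ _).symm
    _ ≤ η / (L + 1) * (L + 1) := by
        gcongr
        exact (sum_dist_le_eVariationOn hφ_var ht_mono ht_mem n).trans (lt_add_one L).le
    _ = η := div_mul_cancel₀ η hL.ne'

end Curves

section CyclicalInvariance

theorem withDensity_apply_le_mul {Z : Type*} [MeasurableSpace Z] (ρ : Measure Z) {f : Z → ℝ≥0∞}
    {S : Set Z} (hS : MeasurableSet S) {M : ℝ≥0∞} (hf : ∀ z ∈ S, f z ≤ M) :
    ρ.withDensity f S ≤ M * ρ S := by
  rw [withDensity_apply _ hS, ← setLIntegral_const]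
  exact setLIntegral_mono' hS hf

theorem mul_le_withDensity_apply {Z : Type*} [MeasurableSpace Z] (ρ : Measure Z) {f : Z → ℝ≥0∞}
    {S : Set Z} (hS : MeasurableSet S) {m : ℝ≥0∞} (hf : ∀ z ∈ S, m ≤ f z) :
    m * ρ S ≤ ρ.withDensity f S := by
  rw [withDensity_apply _ hS, ← setLIntegral_const]
  exact setLIntegral_mono' hS hf

variable {α β : Type*} [MeasurableSpace α] [MeasurableSpace β] {c : α → β → ℝ} {ε : ℝ}
  {μ : Measure α} {ν : Measure β} {π : Measure (α × β)}

theorem IsCyclInvariant.exists_density_exchange (h : IsCyclInvariant c ε μ ν π) :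
    ∃ D : α × β → ℝ, Measurable D ∧ (∀ p, 0 < D p) ∧
      π = (μ.prod ν).withDensity (fun p => ENNReal.ofReal (D p)) ∧
      ∀ p q, D p * D q = Real.exp (-exchangeGain c p q / ε) * (D (p.1, q.2) * D (q.1, p.2)) := by
  obtain ⟨-, D, hD, hD_pos, hπ, hcyc⟩ := h
  refine ⟨D, hD, hD_pos, hπ, fun p q => ?_⟩
  have two_cycle : D p * D q =
      Real.exp (-(1 / ε) * (c p.1 p.2 + c q.1 q.2 - (c p.1 q.2 + c q.1 p.2))) *
        (D (p.1, q.2) * D (q.1, p.2)) := by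
    simpa [Fin.prod_univ_two, Fin.sum_univ_two] using hcyc 1 ![p.1, q.1] ![p.2, q.2]
  rw [two_cycle, exchangeGain]
  ring_nf

variable [SFinite μ] [SFinite ν]

theorem IsCyclInvariant.exists_eq_withDensity_prod (hc : Measurable fun p : α × β => c p.1 p.2)
    (h : IsCyclInvariant c ε μ ν π) :
    ∃ (μ' : Measure α) (ν' : Measure β), SFinite μ' ∧ SFinite ν' ∧
      π = (μ'.prod ν').withDensity (fun p => ENNReal.ofReal (Real.exp (-c p.1 p.2 / ε))) := by
  have := h.1.1
  obtain ⟨x₀, y₀⟩ := π.nonempty_of_neZero.some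
  obtain ⟨D, hD, hD_pos, rfl, hD_exch⟩ := h.exists_density_exchange
  -- The exchange identity against the fixed point `(x₀, y₀)` separates the variables of `D`.
  let F : α → ℝ := fun x => D (x, y₀) * Real.exp (c x y₀ / ε)
  let G : β → ℝ := fun y =>
    D (x₀, y) * Real.exp (c x₀ y / ε) * (Real.exp (-c x₀ y₀ / ε) / D (x₀, y₀))
  have hF_nonneg (x : α) : 0 ≤ F x := by have := hD_pos (x, y₀); positivity
  have hG_nonneg (y : β) : 0 ≤ G y := by have := hD_pos (x₀, y); have := hD_pos (x₀, y₀); positivity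
  have hcx : Measurable fun x => c x y₀ := hc.comp (measurable_id.prodMk measurable_const)
  have hcy : Measurable fun y => c x₀ y := hc.comp (measurable_const.prodMk measurable_id)
  have hF : Measurable fun x => ENNReal.ofReal (F x) := by fun_prop
  have hG : Measurable fun y => ENNReal.ofReal (G y) := by fun_prop
  have D_eq (x : α) (y : β) : D (x, y) = F x * G y * Real.exp (-c x y / ε) := by
    have exp_split : Real.exp (-exchangeGain c (x, y) (x₀, y₀) / ε) =
        Real.exp (c x y₀ / ε) * Real.exp (c x₀ y / ε) * Real.exp (-c x₀ y₀ / ε) *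
          Real.exp (-c x y / ε) := by
      simp only [← Real.exp_add, exchangeGain]
      ring_nf
    rw [eq_div_of_mul_eq (hD_pos _).ne' (hD_exch (x, y) (x₀, y₀)), exp_split]
    ring
  refine ⟨μ.withDensity fun x => ENNReal.ofReal (F x), ν.withDensity fun y => ENNReal.ofReal (G y),
    inferInstance, inferInstance, ?_⟩
  rw [prod_withDensity hF hG, ← withDensity_mul _ (by fun_prop) (by fun_prop)]
  congr 1 with p
  rw [Pi.mul_apply, ← ENNReal.ofReal_mul (hF_nonneg _),
    ← ENNReal.ofReal_mul (mul_nonneg (hF_nonneg _) (hG_nonneg _)), ← D_eq]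

theorem IsCyclInvariant.exp_mul_measure_prod_le (hc : Measurable fun p : α × β => c p.1 p.2)
    (h : IsCyclInvariant c ε μ ν π) (hε : 0 < ε) {A A' : Set α} {B B' : Set β}
    (hA : MeasurableSet A) (hA' : MeasurableSet A') (hB : MeasurableSet B)
    (hB' : MeasurableSet B') {m m' M M' : ℝ}
    (hm : ∀ p ∈ A ×ˢ B, m ≤ c p.1 p.2) (hm' : ∀ p ∈ A' ×ˢ B', m' ≤ c p.1 p.2)
    (hM : ∀ p ∈ A ×ˢ B', c p.1 p.2 ≤ M) (hM' : ∀ p ∈ A' ×ˢ B, c p.1 p.2 ≤ M') :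
    ENNReal.ofReal (Real.exp ((m + m' - M - M') / ε)) * (π (A ×ˢ B) * π (A' ×ˢ B')) ≤
      π (A ×ˢ B') * π (A' ×ˢ B) := by
  obtain ⟨μ', ν', _, _, hπ⟩ := h.exists_eq_withDensity_prod hc
  let e (t : ℝ) : ℝ≥0∞ := ENNReal.ofReal (Real.exp (t / ε))
  have e_mul (s t : ℝ) : e s * e t = e (s + t) := by
    rw [← ENNReal.ofReal_mul (Real.exp_pos _).le, ← Real.exp_add, ← add_div]
  have e_mono {s t : ℝ} (hst : s ≤ t) : e s ≤ e t := by
    dsimp only [e]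
    gcongr
  have upper {S : Set α} {S' : Set β} (hS : MeasurableSet S) (hS' : MeasurableSet S') {m : ℝ}
      (hm : ∀ p ∈ S ×ˢ S', m ≤ c p.1 p.2) : π (S ×ˢ S') ≤ e (-m) * (μ' S * ν' S') := by
    rw [hπ, ← Measure.prod_prod]
    exact withDensity_apply_le_mul _ (hS.prod hS') fun p hp => e_mono (neg_le_neg (hm p hp))
  have lower {S : Set α} {S' : Set β} (hS : MeasurableSet S) (hS' : MeasurableSet S') {M : ℝ}
      (hM : ∀ p ∈ S ×ˢ S', c p.1 p.2 ≤ M) : e (-M) * (μ' S * ν' S') ≤ π (S ×ˢ S') := by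
    rw [hπ, ← Measure.prod_prod]
    exact mul_le_withDensity_apply _ (hS.prod hS') fun p hp => e_mono (neg_le_neg (hM p hp))
  calc e (m + m' - M - M') * (π (A ×ˢ B) * π (A' ×ˢ B'))
      ≤ e (m + m' - M - M') * (e (-m) * (μ' A * ν' B) * (e (-m') * (μ' A' * ν' B'))) := by
        gcongr
        exacts [upper hA hB hm, upper hA' hB' hm']
    _ = e (m + m' - M - M') * e (-m) * e (-m') * (μ' A * ν' B' * (μ' A' * ν' B)) := by ring
    _ = e (-M) * e (-M') * (μ' A * ν' B' * (μ' A' * ν' B)) := by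
        simp only [e_mul]
        ring_nf
    _ = e (-M) * (μ' A * ν' B') * (e (-M') * (μ' A' * ν' B)) := by ring
    _ ≤ π (A ×ˢ B') * π (A' ×ˢ B) := mul_le_mul' (lower hA hB' hM) (lower hA' hB hM')

end CyclicalInvariance

section ExpLowerBoundAt

/-- `π ε` has local exponent at least `a` at `z`: every neighbourhood of `z` has `π ε`-measure at
least `exp (b / ε)` for all small `ε > 0`, whenever `b < a`. Equivalently
`a ≤ liminf ε log (π ε U)` for every neighbourhood `U` of `z`, but stated without logarithms so that
the bounds can be multiplied. -/
def ExpLowerBoundAt {Z : Type*} [TopologicalSpace Z] [MeasurableSpace Z]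
    (π : ℝ → Measure Z) (z : Z) (a : EReal) : Prop :=
  ∀ U ∈ 𝓝 z, ∀ b : ℝ, (b : EReal) < a →
    ∀ᶠ ε in 𝓝[>] (0 : ℝ), ENNReal.ofReal (Real.exp (b / ε)) ≤ π ε U

theorem ExpLowerBoundAt.le_liminf {Z : Type*} [TopologicalSpace Z] [MeasurableSpace Z]
    {π : ℝ → Measure Z} {z : Z} {a : EReal} (h : ExpLowerBoundAt π z a) {U : Set Z} (hU : U ∈ 𝓝 z) :
    a ≤ liminf (fun ε : ℝ => (ε : EReal) * ENNReal.log (π ε U)) (𝓝[>] 0) := by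
  refine EReal.ge_of_forall_gt_iff_ge.1 fun b hb => le_liminf_of_le (h := ?_)
  filter_upwards [h U hU b hb, self_mem_nhdsWithin] with ε hexp (hε : 0 < ε)
  calc (b : EReal) = ε * (b / ε : ℝ) := by rw [← EReal.coe_mul, mul_div_cancel₀ _ hε.ne']
    _ = ε * ENNReal.log (ENNReal.ofReal (Real.exp (b / ε))) := by
        rw [ENNReal.log_ofReal_of_pos (Real.exp_pos _), Real.log_exp]
    _ ≤ ε * ENNReal.log (π ε U) :=
        mul_le_mul_of_nonneg_left (ENNReal.log_le_log hexp) (EReal.coe_nonneg.2 hε.le)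

theorem TendstoWeakly.expLowerBoundAt_zero {Z : Type*} [TopologicalSpace Z] [MeasurableSpace Z]
    [OpensMeasurableSpace Z] [HasOuterApproxClosed Z] {π : ℝ → Measure Z}
    [∀ ε, IsProbabilityMeasure (π ε)] {π₀ : Measure Z} [IsProbabilityMeasure π₀]
    (h : TendstoWeakly π π₀) {z : Z} (hz : z ∈ mSupport π₀) : ExpLowerBoundAt π z 0 := by
  intro U hU b hb
  obtain ⟨V, hVU, hV, hzV⟩ := mem_nhds_iff.1 hU
  have portmanteau : π₀ V ≤ liminf (fun ε => π ε V) (𝓝[>] 0) :=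
    ProbabilityMeasure.le_liminf_measure_open_of_tendsto (μ := ⟨π₀, inferInstance⟩)
      (μs := fun ε => ⟨π ε, inferInstance⟩)
      (ProbabilityMeasure.tendsto_iff_forall_integral_tendsto.2 h) hV
  obtain ⟨m, hm_pos, hm⟩ := exists_between ((hz V hV hzV).trans_le portmanteau)
  have exp_tendsto : Tendsto (fun ε => ENNReal.ofReal (Real.exp (b / ε))) (𝓝[>] 0) (𝓝 0) := by
    rw [← ENNReal.ofReal_zero]
    exact ENNReal.tendsto_ofReal (Real.tendsto_exp_atBot.comp
      (tendsto_inv_nhdsGT_zero.const_mul_atTop_of_neg (EReal.coe_neg'.1 hb)))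
  filter_upwards [eventually_lt_of_lt_liminf hm, exp_tendsto.eventually_lt_const hm_pos]
    with ε hmV hexp
  exact (hexp.trans hmV).le.trans (measure_mono hVU)

theorem exists_isOpen_prod_subset₄ {α β : Type*} [TopologicalSpace α] [TopologicalSpace β]
    {x x' : α} {y y' : β} {S₁ S₂ S₃ S₄ : Set (α × β)} (h₁ : S₁ ∈ 𝓝 (x, y)) (h₂ : S₂ ∈ 𝓝 (x', y'))
    (h₃ : S₃ ∈ 𝓝 (x, y')) (h₄ : S₄ ∈ 𝓝 (x', y)) :
    ∃ (A A' : Set α) (B B' : Set β), (IsOpen A ∧ x ∈ A) ∧ (IsOpen A' ∧ x' ∈ A') ∧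
      (IsOpen B ∧ y ∈ B) ∧ (IsOpen B' ∧ y' ∈ B') ∧
      A ×ˢ B ⊆ S₁ ∧ A' ×ˢ B' ⊆ S₂ ∧ A ×ˢ B' ⊆ S₃ ∧ A' ×ˢ B ⊆ S₄ := by
  obtain ⟨A₁, B₁, hA₁, hx₁, hB₁, hy₁, hS₁⟩ := mem_nhds_prod_iff'.1 h₁
  obtain ⟨A₂, B₂, hA₂, hx₂, hB₂, hy₂, hS₂⟩ := mem_nhds_prod_iff'.1 h₂
  obtain ⟨A₃, B₃, hA₃, hx₃, hB₃, hy₃, hS₃⟩ := mem_nhds_prod_iff'.1 h₃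
  obtain ⟨A₄, B₄, hA₄, hx₄, hB₄, hy₄, hS₄⟩ := mem_nhds_prod_iff'.1 h₄
  exact ⟨A₁ ∩ A₃, A₂ ∩ A₄, B₁ ∩ B₄, B₂ ∩ B₃, ⟨hA₁.inter hA₃, hx₁, hx₃⟩, ⟨hA₂.inter hA₄, hx₂, hx₄⟩,
    ⟨hB₁.inter hB₄, hy₁, hy₄⟩, ⟨hB₂.inter hB₃, hy₂, hy₃⟩,
    (prod_mono inter_subset_left inter_subset_left).trans hS₁,
    (prod_mono inter_subset_left inter_subset_left).trans hS₂,
    (prod_mono inter_subset_right inter_subset_right).trans hS₃,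
    (prod_mono inter_subset_right inter_subset_right).trans hS₄⟩

variable {α β : Type*} [TopologicalSpace α] [MeasurableSpace α] [OpensMeasurableSpace α]
  [TopologicalSpace β] [MeasurableSpace β] [OpensMeasurableSpace β]
  [SecondCountableTopologyEither α β] {μ : Measure α} {ν : Measure β} [SFinite μ] [SFinite ν]
  {c : α → β → ℝ} {π : ℝ → Measure (α × β)}

theorem ExpLowerBoundAt.exchange (hc : Continuous fun p : α × β => c p.1 p.2)
    (hπ : ∀ ε > 0, IsCyclInvariant c ε μ ν (π ε)) {p q : α × β} {a a' : ℝ}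
    (hp : ExpLowerBoundAt π p a) (hq : ExpLowerBoundAt π q a') :
    ExpLowerBoundAt π (p.1, q.2) ((a + a' + exchangeGain c p q : ℝ) : EReal) := by
  intro W hW b hb
  set r := (a + a' + exchangeGain c p q - b) / 6 with hr_def
  have hr : 0 < r := by linarith [EReal.coe_lt_coe_iff.1 hb]
  have c_gt (z : α × β) : ∀ᶠ w in 𝓝 z, c z.1 z.2 - r < c w.1 w.2 :=
    hc.continuousAt.eventually_const_lt (sub_lt_self _ hr)
  have c_lt (z : α × β) : ∀ᶠ w in 𝓝 z, c w.1 w.2 < c z.1 z.2 + r :=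
    hc.continuousAt.eventually_lt_const (lt_add_of_pos_right _ hr)
  obtain ⟨A, A', B, B', ⟨hA, hxA⟩, ⟨hA', hxA'⟩, ⟨hB, hyB⟩, ⟨hB', hyB'⟩, hAB, hA'B', hAB', hA'B⟩ :=
    exists_isOpen_prod_subset₄ (c_gt p) (c_gt q) (inter_mem (c_lt (p.1, q.2)) hW) (c_lt (q.1, p.2))
  filter_upwards [self_mem_nhdsWithin,
    hp _ ((hA.prod hB).mem_nhds ⟨hxA, hyB⟩) (a - r) (EReal.coe_lt_coe (sub_lt_self a hr)),
    hq _ ((hA'.prod hB').mem_nhds ⟨hxA', hyB'⟩) (a' - r) (EReal.coe_lt_coe (sub_lt_self a' hr))]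
    with ε (hε : 0 < ε) hpε hqε
  have := (hπ ε hε).1.1
  have box_exchange := (hπ ε hε).exp_mul_measure_prod_le hc.measurable hε hA.measurableSet
    hA'.measurableSet hB.measurableSet hB'.measurableSet (fun w hw => (hAB hw).le)
    (fun w hw => (hA'B' hw).le) (fun w hw => (hAB' hw).1.le) (fun w hw => (hA'B hw).le)
  set gain := c p.1 p.2 - r + (c q.1 q.2 - r) - (c p.1 q.2 + r) - (c q.1 p.2 + r) with hgain
  have b_eq : b = gain + (a - r + (a' - r)) := by
    simp only [hgain, hr_def, exchangeGain]
    ring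
  calc ENNReal.ofReal (Real.exp (b / ε))
      = ENNReal.ofReal (Real.exp (gain / ε)) * (ENNReal.ofReal (Real.exp ((a - r) / ε)) *
          ENNReal.ofReal (Real.exp ((a' - r) / ε))) := by
        simp only [← ENNReal.ofReal_mul (Real.exp_pos _).le, ← Real.exp_add, ← add_div, b_eq]
    _ ≤ ENNReal.ofReal (Real.exp (gain / ε)) * (π ε (A ×ˢ B) * π ε (A' ×ˢ B')) := by gcongr
    _ ≤ π ε (A ×ˢ B') * π ε (A' ×ˢ B) := box_exchange
    _ ≤ π ε (A ×ˢ B') := mul_le_of_le_one_right' prob_le_one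
    _ ≤ π ε W := measure_mono fun w hw => (hAB' hw).2

theorem expLowerBoundAt_of_chain (hc : Continuous fun p : α × β => c p.1 p.2)
    (hπ : ∀ ε > 0, IsCyclInvariant c ε μ ν (π ε)) {z : ℕ → α × β} {n : ℕ}
    (hz : ∀ i ≤ n, ExpLowerBoundAt π (z i) 0) :
    ExpLowerBoundAt π ((z 0).1, (z n).2)
      ((∑ i ∈ Finset.range n, exchangeGain c (z i) (z (i + 1)) - cycleGain c z n : ℝ) : EReal) := by
  induction n with
  | zero => simpa [cycleGain] using hz 0 le_rfl
  | succ n ih =>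
    convert (ih fun i hi => hz i (by omega)).exchange hc hπ (hz (n + 1) le_rfl) using 2
    rw [Finset.sum_range_succ, cycleGain_succ]
    ring

theorem expLowerBoundAt_neg_rateI (hc : Continuous fun p : α × β => c p.1 p.2)
    (hπ : ∀ ε > 0, IsCyclInvariant c ε μ ν (π ε)) {Γ : Set (α × β)}
    (hΓ : ∀ p ∈ Γ, ExpLowerBoundAt π p 0) {x : α} {y : β}
    (hchain : ∀ η > 0, ∃ (n : ℕ) (z : ℕ → α × β), (z 0).1 = x ∧ (z n).2 = y ∧ (∀ i, z i ∈ Γ) ∧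
      -η ≤ ∑ i ∈ Finset.range n, exchangeGain c (z i) (z (i + 1))) :
    ExpLowerBoundAt π (x, y) (-rateI c Γ (x, y)) := by
  intro U hU b hb
  obtain ⟨b', hbb', hb'⟩ := EReal.lt_iff_exists_real_btwn.1 hb
  obtain ⟨n, z, rfl, rfl, hz, hgain⟩ := hchain (b' - b) (sub_pos.2 (EReal.coe_lt_coe_iff.1 hbb'))
  refine expLowerBoundAt_of_chain hc hπ (fun i _ => hΓ _ (hz i)) U hU b ?_
  have cycle_lt : cycleGain c z n < -b' := by
    rw [← EReal.coe_lt_coe_iff, EReal.coe_neg]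
    exact ((cycleGain_le_rateICyc c fun i _ => hz i).trans (rateICyc_le_rateI c Γ _)).trans_lt
      (EReal.lt_neg_comm.1 hb')
  exact EReal.coe_lt_coe (by linarith)

end ExpLowerBoundAt

section General

variable {α β : Type*} [PseudoMetricSpace α] [MeasurableSpace α] [OpensMeasurableSpace α]
  [TopologicalSpace β] [TopologicalSpace.PseudoMetrizableSpace β] [MeasurableSpace β]
  [OpensMeasurableSpace β] [SecondCountableTopologyEither α β]

theorem stmt11_general (μ : Measure α) (ν : Measure β) [SFinite μ] [SFinite ν]
    (c : α → β → ℝ) (hc : Continuous fun p : α × β => c p.1 p.2)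
    (πε : ℝ → Measure (α × β)) [∀ ε, IsProbabilityMeasure (πε ε)]
    (hπε : ∀ ε, 0 < ε → IsCyclInvariant c ε μ ν (πε ε))
    (πs : Measure (α × β)) [IsProbabilityMeasure πs] (hconv : TendstoWeakly πε πs)
    (T : α → β) (hgraph : ∀ p ∈ mSupport πs, p.2 = T p.1)
    (harc : ∀ x ∈ Prod.fst '' mSupport πs, ∀ x' ∈ Prod.fst '' mSupport πs,
      ∃ φ : ℝ → α, ContinuousOn φ (Icc 0 1) ∧
        (∀ t ∈ Icc (0 : ℝ) 1, φ t ∈ Prod.fst '' mSupport πs) ∧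
        φ 0 = x ∧ φ 1 = x' ∧ eVariationOn φ (Icc 0 1) ≠ ⊤)
    (hreg : ∀ K : Set α, K ⊆ Prod.fst '' mSupport πs → IsCompact K →
      ∀ η > (0 : ℝ), ∃ δ > (0 : ℝ), ∀ x₁ ∈ K, ∀ x₂ ∈ K, dist x₁ x₂ < δ →
        |c x₁ (T x₁) + c x₂ (T x₂) - c x₁ (T x₂) - c x₂ (T x₁)| ≤ η * dist x₁ x₂)
    (U : Set (α × β)) (hU : IsOpen U) :
    -(⨅ z ∈ U ∩ (Prod.fst '' mSupport πs) ×ˢ (Prod.snd '' mSupport πs),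
        rateI c (mSupport πs) z) ≤
      liminf (fun (ε : ℝ) => (ε : EReal) * ENNReal.log (πε ε U)) (𝓝[>] (0 : ℝ)) := by
  have graph_mem : ∀ x ∈ Prod.fst '' mSupport πs, (x, T x) ∈ mSupport πs := by
    rintro _ ⟨p, hp, rfl⟩
    rwa [← hgraph p hp]
  rw [EReal.neg_le, le_iInf₂_iff]
  rintro ⟨x, _⟩ ⟨hzU, hx, ⟨q, hq, rfl⟩⟩
  rw [EReal.neg_le]
  refine ExpLowerBoundAt.le_liminf (expLowerBoundAt_neg_rateI hc hπε
    (fun p hp => hconv.expLowerBoundAt_zero hp) fun η hη => ?_) (hU.mem_nhds hzU)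
  obtain ⟨φ, hφ, hφ_mem, rfl, hφ1, hφ_var⟩ := harc x hx q.1 (mem_image_of_mem _ hq)
  have hφ_image : φ '' Icc 0 1 ⊆ Prod.fst '' mSupport πs := image_subset_iff.2 hφ_mem
  obtain ⟨n, u, hu0, hun, hu_mem, hsum⟩ :=
    exists_abs_sum_le_of_rectifiable zero_le_one hφ hφ_var
      (hreg _ hφ_image (isCompact_Icc.image_of_continuousOn hφ)) hη
  refine ⟨n, fun i => (u i, T (u i)), hu0, ?_, fun i => graph_mem _ (hφ_image (hu_mem i)),
    (abs_le.1 hsum).1⟩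
  exact (congrArg T (hun.trans hφ1)).trans (hgraph q hq).symm

end General

/-- large deviations lower bound under the regularity assumption. -/
theorem stmt11 (μ : Measure X) (ν : Measure Y)
    [IsProbabilityMeasure μ] [IsProbabilityMeasure ν]
    (c : X → Y → ℝ) (hc : Continuous fun p : X × Y => c p.1 p.2) (hc0 : ∀ x y, 0 ≤ c x y)
    (πε : ℝ → Measure (X × Y)) [∀ ε, IsProbabilityMeasure (πε ε)]
    (hπε : ∀ ε, 0 < ε → IsCyclInvariant c ε μ ν (πε ε))
    (πs : Measure (X × Y)) (hπs : IsCoupling μ ν πs) (hconv : TendstoWeakly πε πs)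
    (T : X → Y) (hgraph : ∀ p ∈ mSupport πs, p.2 = T p.1)
    (harc : ∀ x ∈ Prod.fst '' mSupport πs, ∀ x' ∈ Prod.fst '' mSupport πs,
      ∃ φ : ℝ → X, ContinuousOn φ (Icc 0 1) ∧
        (∀ t ∈ Icc (0 : ℝ) 1, φ t ∈ Prod.fst '' mSupport πs) ∧
        φ 0 = x ∧ φ 1 = x' ∧ eVariationOn φ (Icc 0 1) ≠ ⊤)
    (hreg : ∀ K : Set X, K ⊆ Prod.fst '' mSupport πs → IsCompact K →
      ∀ η > (0 : ℝ), ∃ δ > (0 : ℝ), ∀ x₁ ∈ K, ∀ x₂ ∈ K, dist x₁ x₂ < δ →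
        |c x₁ (T x₁) + c x₂ (T x₂) - c x₁ (T x₂) - c x₂ (T x₁)| ≤ η * dist x₁ x₂) :
    ∀ U : Set (X × Y), IsOpen U →
      U ⊆ (Prod.fst '' mSupport πs) ×ˢ (Prod.snd '' mSupport πs) →
      -(⨅ z ∈ U, rateI c (mSupport πs) z) ≤
        liminf (fun (ε : ℝ) => (ε : EReal) * ENNReal.log (πε ε U)) (𝓝[>] (0 : ℝ)) := by
  intro U hU hU_sub
  have := hπs.1
  simpa only [inter_eq_left.2 hU_sub] using
    stmt11_general μ ν c hc πε hπε πs hconv T hgraph harc hreg U hU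

end Statement

end EOT
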